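/- Let Ω ⊂ ℂ² be a bounded pseudoconvex Hartogs domain with smooth boundary. If K ⊂ bΩ is compact and ∂δ̃/∂z ≠ 0 at every point of K, then there exist a neighborhood V of K and a smooth defining function ρ for Ω on V whose complex Hessian is positive semidefinite at every point of bΩ ∩ V. -/

import Mathlib

open Complex Metric Set Real Topology Filter

noncomputable section
open scoped Classical

/-- The signed distance function to the boundary of `Ω`: negative inside, positive outside. -/
def sdist (Ω : Set (ℂ × ℂ)) (p : ℂ × ℂ) : ℝ :=
  if p ∈ Ω then -Metric.infDist p (frontier Ω) else Metric.infDist p (frontier Ω)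

/-- Complexification of a real-valued function on `ℂ²`. -/
def cf (f : ℂ × ℂ → ℝ) : ℂ × ℂ → ℂ := fun p => (f p : ℂ)

/-- Wirtinger derivative `∂/∂z` (first coordinate). -/
def wdz (f : ℂ × ℂ → ℂ) (p : ℂ × ℂ) : ℂ :=
  (fderiv ℝ f p (1, 0) - Complex.I * fderiv ℝ f p (Complex.I, 0)) / 2

/-- Wirtinger derivative `∂/∂z̄` (first coordinate). -/
def wdzbar (f : ℂ × ℂ → ℂ) (p : ℂ × ℂ) : ℂ :=
  (fderiv ℝ f p (1, 0) + Complex.I * fderiv ℝ f p (Complex.I, 0)) / 2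

/-- Wirtinger derivative `∂/∂w` (second coordinate). -/
def wdw (f : ℂ × ℂ → ℂ) (p : ℂ × ℂ) : ℂ :=
  (fderiv ℝ f p (0, 1) - Complex.I * fderiv ℝ f p (0, Complex.I)) / 2

/-- Wirtinger derivative `∂/∂w̄` (second coordinate). -/
def wdwbar (f : ℂ × ℂ → ℂ) (p : ℂ × ℂ) : ℂ :=
  (fderiv ℝ f p (0, 1) + Complex.I * fderiv ℝ f p (0, Complex.I)) / 2

/-- The complex Hessian quadratic form of a real-valued function `f` at `p`
in the direction `(ξ, η)`. -/
def cHess (f : ℂ × ℂ → ℝ) (p : ℂ × ℂ) (ξ η : ℂ) : ℝ :=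
  (wdz (wdzbar (cf f)) p * ξ * (starRingEnd ℂ) ξ
    + wdz (wdwbar (cf f)) p * ξ * (starRingEnd ℂ) η
    + wdw (wdzbar (cf f)) p * η * (starRingEnd ℂ) ξ
    + wdw (wdwbar (cf f)) p * η * (starRingEnd ℂ) η).re

/-- A (C²) function is plurisubharmonic on a set if its complex Hessian is positive
semidefinite at every point of the set. -/
def PshOn (f : ℂ × ℂ → ℝ) (S : Set (ℂ × ℂ)) : Prop :=
  ∀ p ∈ S, ∀ ξ η : ℂ, 0 ≤ cHess f p ξ η

/-- `Ω ⊆ ℂ²` is a Hartogs domain if it is invariant under rotations in the first variable. -/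
def IsHartogs (Ω : Set (ℂ × ℂ)) : Prop :=
  ∀ z w : ℂ, ∀ θ : ℝ, (z, w) ∈ Ω → (Complex.exp (θ * Complex.I) * z, w) ∈ Ω

/-- A global smooth defining function for `Ω`. -/
def IsDefiningFunction (Ω : Set (ℂ × ℂ)) (ρ : ℂ × ℂ → ℝ) : Prop :=
  ContDiff ℝ (⊤ : ℕ∞) ρ ∧ (∀ p, p ∈ Ω ↔ ρ p < 0) ∧ ∀ p ∈ frontier Ω, fderiv ℝ ρ p ≠ 0

/-- `Ω` has smooth boundary if it admits a global smooth defining function. -/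
def HasSmoothBoundary (Ω : Set (ℂ × ℂ)) : Prop :=
  ∃ ρ, IsDefiningFunction Ω ρ

/-- `(ξ, η)` is a complex tangent vector to `bΩ` at `p` (with respect to the signed
distance function). -/
def IsComplexTangent (Ω : Set (ℂ × ℂ)) (p : ℂ × ℂ) (ξ η : ℂ) : Prop :=
  ξ * wdz (cf (sdist Ω)) p + η * wdw (cf (sdist Ω)) p = 0

/-- Levi pseudoconvexity of `Ω`, expressed via the signed distance function. -/
def IsPseudoconvex (Ω : Set (ℂ × ℂ)) : Prop :=
  ∀ p ∈ frontier Ω, ∀ ξ η : ℂ, IsComplexTangent Ω p ξ η → 0 ≤ cHess (sdist Ω) p ξ η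

/-- Strict pseudoconvexity at a boundary point. -/
def StrictlyPseudoconvexAt (Ω : Set (ℂ × ℂ)) (p : ℂ × ℂ) : Prop :=
  ∀ ξ η : ℂ, (ξ, η) ≠ (0, 0) → IsComplexTangent Ω p ξ η → 0 < cHess (sdist Ω) p ξ η

/-- The set of weakly pseudoconvex boundary points. -/
def weakPoints (Ω : Set (ℂ × ℂ)) : Set (ℂ × ℂ) :=
  {p ∈ frontier Ω | ¬ StrictlyPseudoconvexAt Ω p}

/-- `τ` is a Diederich–Fornæss exponent for `Ω`. -/
def IsDFExponent (Ω : Set (ℂ × ℂ)) (τ : ℝ) : Prop :=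
  0 < τ ∧ τ < 1 ∧ ∃ ρ, IsDefiningFunction Ω ρ ∧
    PshOn (fun p => -(-ρ p) ^ τ) Ω

/-- The Diederich–Fornæss index of `Ω`. -/
def DFIndex (Ω : Set (ℂ × ℂ)) : ℝ := sSup {τ | IsDFExponent Ω τ}

/-- A pseudoconvex open set: one admitting a smooth plurisubharmonic exhaustion function. -/
def IsPseudoconvexOpen (D : Set (ℂ × ℂ)) : Prop :=
  IsOpen D ∧ ∃ φ : ℂ × ℂ → ℝ, ContDiffOn ℝ (⊤ : ℕ∞) φ D ∧ PshOn φ D ∧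
    ∀ c : ℝ, IsCompact {p ∈ D | φ p ≤ c}

/-- `closure Ω` admits a Stein neighborhood basis. -/
def AdmitsSteinBasis (Ω : Set (ℂ × ℂ)) : Prop :=
  ∀ U : Set (ℂ × ℂ), IsOpen U → closure Ω ⊆ U →
    ∃ D : Set (ℂ × ℂ), IsPseudoconvexOpen D ∧ closure Ω ⊆ D ∧ D ⊆ U


/-! ### Basic facts -/

theorem frontier_zero {Ω : Set (ℂ × ℂ)} {r : ℂ × ℂ → ℝ} (hr : IsDefiningFunction Ω r)
    {p : ℂ × ℂ} (hopen : IsOpen Ω) (hp : p ∈ frontier Ω) : r p = 0 := by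
  have hc : Continuous r := hr.1.continuous
  have h1 : p ∉ Ω := by
    rw [hopen.frontier_eq] at hp; exact hp.2
  have h2 : r p ≤ 0 := by
    have : closure Ω ⊆ {x | r x ≤ 0} :=
      closure_minimal (fun x hx => ((hr.2.1 x).1 hx).le) (isClosed_le hc continuous_const)
    exact this (frontier_subset_closure hp)
  have h3 := (hr.2.1 p).not.1 h1
  linarith

theorem mem_frontier_of {Ω : Set (ℂ × ℂ)} {r : ℂ × ℂ → ℝ} (hr : IsDefiningFunction Ω r)
    {x : ℂ × ℂ} (hopen : IsOpen Ω) (h0 : r x = 0) (hd : fderiv ℝ r x ≠ 0) : x ∈ frontier Ω := by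
  rw [hopen.frontier_eq]
  refine ⟨?_, fun h => by have := (hr.2.1 x).1 h; linarith⟩
  by_contra hx
  apply hd
  apply IsLocalMin.fderiv_eq_zero
  have : (closure Ω)ᶜ ∈ 𝓝 x := isClosed_closure.isOpen_compl.mem_nhds hx
  filter_upwards [this] with y hy
  have h1 : y ∉ Ω := fun h => hy (subset_closure h)
  have := (hr.2.1 y).not.1 h1
  rw [h0]; linarith

/-- A function vanishing on the boundary has differential proportional to `dr`. -/
theorem tang {Ω : Set (ℂ × ℂ)} {r : ℂ × ℂ → ℝ} (hr : IsDefiningFunction Ω r)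
    {p : ℂ × ℂ} (hopen : IsOpen Ω) (hp : p ∈ frontier Ω) {F : ℂ × ℂ → ℂ}
    (hF : DifferentiableAt ℝ F p) (h0 : ∀ᶠ x in 𝓝 p, x ∈ frontier Ω → F x = 0) :
    ∃ c : ℂ, ∀ v, fderiv ℝ F p v = c * ((fderiv ℝ r p v : ℝ) : ℂ) := by
  have hs : HasStrictFDerivAt r (fderiv ℝ r p) p :=
    hr.1.contDiffAt.hasStrictFDerivAt (by simp)
  have hne := hr.2.2 p hp
  obtain ⟨v1, hv1⟩ : ∃ v, fderiv ℝ r p v ≠ 0 := by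
    by_contra h; push Not at h; exact hne (ContinuousLinearMap.ext h)
  have hsurj : (fderiv ℝ r p).range = ⊤ := by
    rw [LinearMap.range_eq_top]
    intro y
    refine ⟨(y / fderiv ℝ r p v1) • v1, ?_⟩
    simp [hv1]
  have hrp := frontier_zero hr hopen hp
  have hγ := hs.to_implicitFunction hsurj
  have hγ0 : hs.implicitFunction r (fderiv ℝ r p) hsurj (r p) 0 = p := by
    exact hs.implicitFunction_apply_image hsurj
  set γ := hs.implicitFunction r (fderiv ℝ r p) hsurj (r p) with hγdef
  have hcont : Tendsto γ (𝓝 0) (𝓝 p) := by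
    have := hγ.continuousAt
    rw [ContinuousAt, hγ0] at this
    exact this
  have hmap : ∀ᶠ y in 𝓝 (0 : (fderiv ℝ r p).ker), r (γ y) = r p := by
    have h := hs.map_implicitFunction_eq hsurj
    have h2 : Tendsto (fun y : (fderiv ℝ r p).ker => (r p, y)) (𝓝 0) (𝓝 (r p, 0)) :=
      (Continuous.prodMk_right (r p)).tendsto 0
    exact h2.eventually h
  have hdne : ∀ᶠ x in 𝓝 p, fderiv ℝ r x ≠ 0 := by
    have : Continuous (fderiv ℝ r) := hr.1.continuous_fderiv (by simp)
    exact this.continuousAt.eventually_ne hne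
  have hz : ∀ᶠ y in 𝓝 (0 : (fderiv ℝ r p).ker), F (γ y) = 0 := by
    filter_upwards [hmap, hcont.eventually hdne, hcont.eventually h0] with y h1 h2 h3
    exact h3 (mem_frontier_of hr hopen (h1.trans hrp) h2)
  have hker : ∀ v, fderiv ℝ r p v = 0 → fderiv ℝ F p v = 0 := by
    intro v hv
    have hF' : HasFDerivAt F (fderiv ℝ F p) (γ 0) := by rw [hγ0]; exact hF.hasFDerivAt
    have h1 := hF'.comp (0 : (fderiv ℝ r p).ker) hγ.hasFDerivAt
    have h2 : HasFDerivAt (F ∘ γ) (0 : (fderiv ℝ r p).ker →L[ℝ] ℂ) 0 :=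
      (hasFDerivAt_const (0 : ℂ) _).congr_of_eventuallyEq hz
    have h3 := h1.unique h2
    have := DFunLike.congr_fun h3 (⟨v, hv⟩ : (fderiv ℝ r p).ker)
    simpa using this
  refine ⟨fderiv ℝ F p v1 / ((fderiv ℝ r p v1 : ℝ) : ℂ), fun v => ?_⟩
  have h := hker (v - (fderiv ℝ r p v / fderiv ℝ r p v1) • v1) (by simp [hv1])
  rw [map_sub, map_smul, sub_eq_zero] at h
  rw [h, Complex.real_smul]
  push_cast
  ring

theorem conj_two : (starRingEnd ℂ) 2 = 2 := map_ofNat _ 2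

theorem fderiv_cf {f : ℂ × ℂ → ℝ} {p : ℂ × ℂ} (hf : DifferentiableAt ℝ f p) (v : ℂ × ℂ) :
    fderiv ℝ (cf f) p v = ((fderiv ℝ f p v : ℝ) : ℂ) := by
  have : HasFDerivAt (cf f) (Complex.ofRealCLM.comp (fderiv ℝ f p)) p :=
    Complex.ofRealCLM.hasFDerivAt.comp p hf.hasFDerivAt
  rw [this.fderiv]; rfl

theorem diff_cf {f : ℂ × ℂ → ℝ} {p : ℂ × ℂ} : DifferentiableAt ℝ (cf f) p ↔
    DifferentiableAt ℝ f p := by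
  constructor
  · intro h
    exact (Complex.reCLM.differentiableAt.comp p h :)
  · intro h
    exact (Complex.ofRealCLM.differentiableAt.comp p h :)

theorem contDiffAt_cf {f : ℂ × ℂ → ℝ} {p : ℂ × ℂ} {n : WithTop ℕ∞} (h : ContDiffAt ℝ n f p) :
    ContDiffAt ℝ n (cf f) p :=
  (Complex.ofRealCLM.contDiff.contDiffAt.comp p h :)

theorem wdz_cf {f : ℂ × ℂ → ℝ} {p : ℂ × ℂ} (hf : DifferentiableAt ℝ f p) :
    wdz (cf f) p = ((fderiv ℝ f p (1, 0) : ℝ) - Complex.I * (fderiv ℝ f p (Complex.I, 0) : ℝ)) / 2 := by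
  rw [wdz, fderiv_cf hf, fderiv_cf hf]

theorem wdw_cf {f : ℂ × ℂ → ℝ} {p : ℂ × ℂ} (hf : DifferentiableAt ℝ f p) :
    wdw (cf f) p = ((fderiv ℝ f p (0, 1) : ℝ) - Complex.I * (fderiv ℝ f p (0, Complex.I) : ℝ)) / 2 := by
  rw [wdw, fderiv_cf hf, fderiv_cf hf]

theorem wdzbar_cf {f : ℂ × ℂ → ℝ} {p : ℂ × ℂ} (hf : DifferentiableAt ℝ f p) :
    wdzbar (cf f) p = (starRingEnd ℂ) (wdz (cf f) p) := by
  rw [wdzbar, wdz, fderiv_cf hf, fderiv_cf hf]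
  simp [Complex.conj_ofReal, conj_two]

theorem wdwbar_cf {f : ℂ × ℂ → ℝ} {p : ℂ × ℂ} (hf : DifferentiableAt ℝ f p) :
    wdwbar (cf f) p = (starRingEnd ℂ) (wdw (cf f) p) := by
  rw [wdwbar, wdw, fderiv_cf hf, fderiv_cf hf]
  simp [Complex.conj_ofReal, conj_two]

theorem fderiv_wd {f : ℂ × ℂ → ℝ} {p : ℂ × ℂ} (hf : DifferentiableAt ℝ f p) (v : ℂ × ℂ) :
    fderiv ℝ f p v = 2 * (wdz (cf f) p * v.1 + wdw (cf f) p * v.2).re := by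
  have hv : v = v.1.re • ((1 : ℂ), (0 : ℂ)) + v.1.im • (Complex.I, (0 : ℂ)) +
      v.2.re • ((0 : ℂ), (1 : ℂ)) + v.2.im • ((0 : ℂ), Complex.I) := by
    ext <;> simp
  rw [wdz_cf hf, wdw_cf hf]
  conv_lhs => rw [hv]
  simp only [map_add, map_smul, smul_eq_mul]
  simp
  ring

/-- Smoothness of the maps `x ↦ df(x) v`. -/
theorem contDiffAt_dir {G : Type*} [NormedAddCommGroup G] [NormedSpace ℝ G] {f : ℂ × ℂ → G} {p : ℂ × ℂ} {m n : WithTop ℕ∞}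
    (hf : ContDiffAt ℝ n f p) (hmn : m + 1 ≤ n) (v : ℂ × ℂ) :
    ContDiffAt ℝ m (fun x => fderiv ℝ f x v) p :=
  (hf.fderiv_right hmn).clm_apply contDiffAt_const

theorem contDiffAt_wdz {f : ℂ × ℂ → ℂ} {p : ℂ × ℂ} {m n : WithTop ℕ∞}
    (hf : ContDiffAt ℝ n f p) (hmn : m + 1 ≤ n) : ContDiffAt ℝ m (wdz f) p := by
  unfold wdz
  exact ((contDiffAt_dir hf hmn _).sub (contDiffAt_const.mul (contDiffAt_dir hf hmn _))).div_const _

theorem contDiffAt_wdw {f : ℂ × ℂ → ℂ} {p : ℂ × ℂ} {m n : WithTop ℕ∞}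
    (hf : ContDiffAt ℝ n f p) (hmn : m + 1 ≤ n) : ContDiffAt ℝ m (wdw f) p := by
  unfold wdw
  exact ((contDiffAt_dir hf hmn _).sub (contDiffAt_const.mul (contDiffAt_dir hf hmn _))).div_const _

theorem contDiffAt_wdzbar {f : ℂ × ℂ → ℂ} {p : ℂ × ℂ} {m n : WithTop ℕ∞}
    (hf : ContDiffAt ℝ n f p) (hmn : m + 1 ≤ n) : ContDiffAt ℝ m (wdzbar f) p := by
  unfold wdzbar
  exact ((contDiffAt_dir hf hmn _).add (contDiffAt_const.mul (contDiffAt_dir hf hmn _))).div_const _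

theorem contDiffAt_wdwbar {f : ℂ × ℂ → ℂ} {p : ℂ × ℂ} {m n : WithTop ℕ∞}
    (hf : ContDiffAt ℝ n f p) (hmn : m + 1 ≤ n) : ContDiffAt ℝ m (wdwbar f) p := by
  unfold wdwbar
  exact ((contDiffAt_dir hf hmn _).add (contDiffAt_const.mul (contDiffAt_dir hf hmn _))).div_const _

theorem fderiv_dir {f : ℂ × ℂ → ℂ} {p : ℂ × ℂ} (hf : ContDiffAt ℝ 2 f p) (u v : ℂ × ℂ) :
    fderiv ℝ (fun x => fderiv ℝ f x v) p u = fderiv ℝ (fderiv ℝ f) p u v := by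
  have h : DifferentiableAt ℝ (fderiv ℝ f) p :=
    (hf.fderiv_right (m := 1) (by norm_num)).differentiableAt (by simp)
  rw [fderiv_clm_apply h (differentiableAt_const v)]
  simp

/-- Symmetry of mixed Wirtinger derivatives. -/
theorem wdz_wdwbar_comm {f : ℂ × ℂ → ℂ} {p : ℂ × ℂ} (hf : ContDiffAt ℝ 2 f p) :
    wdz (wdwbar f) p = wdwbar (wdz f) p := by
  have hd : ∀ v, DifferentiableAt ℝ (fun x => fderiv ℝ f x v) p := fun v =>
    (contDiffAt_dir hf (m := 1) (by norm_num) v).differentiableAt (by simp)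
  have e1 : ∀ u, fderiv ℝ (wdwbar f) p u = (fderiv ℝ (fderiv ℝ f) p u (0, 1) +
      Complex.I * fderiv ℝ (fderiv ℝ f) p u (0, Complex.I)) / 2 := by
    intro u
    have : HasFDerivAt (wdwbar f) _ p :=
      (((hd (0,1)).hasFDerivAt.add ((hd (0,Complex.I)).hasFDerivAt.const_mul Complex.I)).mul_const (2:ℂ)⁻¹)
    rw [this.fderiv]
    simp [fderiv_dir hf]
    ring
  have e2 : ∀ u, fderiv ℝ (wdz f) p u = (fderiv ℝ (fderiv ℝ f) p u (1, 0) -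
      Complex.I * fderiv ℝ (fderiv ℝ f) p u (Complex.I, 0)) / 2 := by
    intro u
    have : HasFDerivAt (wdz f) _ p :=
      (((hd (1,0)).hasFDerivAt.sub ((hd (Complex.I,0)).hasFDerivAt.const_mul Complex.I)).mul_const (2:ℂ)⁻¹)
    rw [this.fderiv]
    simp [fderiv_dir hf]
    ring
  have hsym : IsSymmSndFDerivAt ℝ f p := hf.isSymmSndFDerivAt (by simp)
  rw [wdz, wdwbar, e1, e1, e2, e2, hsym.eq (1,0) (0,1), hsym.eq (1,0) (0,Complex.I),
    hsym.eq (Complex.I,0) (0,1), hsym.eq (Complex.I,0) (0,Complex.I)]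
  ring

theorem wdwbar_conj {F : ℂ × ℂ → ℂ} {p : ℂ × ℂ} (hF : DifferentiableAt ℝ F p) :
    wdwbar (fun x => (starRingEnd ℂ) (F x)) p = (starRingEnd ℂ) (wdw F p) := by
  have : HasFDerivAt (fun x => (starRingEnd ℂ) (F x)) _ p :=
    (Complex.conjCLE : ℂ →L[ℝ] ℂ).hasFDerivAt.comp p hF.hasFDerivAt
  rw [wdwbar, wdw, this.fderiv]
  simp [conj_two]

/-! ### The signed distance function near nondegenerate points -/

theorem sdist_frontier {Ω : Set (ℂ × ℂ)} {p : ℂ × ℂ} (hp : p ∈ frontier Ω) : sdist Ω p = 0 := by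
  simp [sdist, Metric.infDist_zero_of_mem hp]

theorem abs_sdist {Ω : Set (ℂ × ℂ)} (p : ℂ × ℂ) : |sdist Ω p| = Metric.infDist p (frontier Ω) := by
  unfold sdist
  split_ifs <;> simp [abs_of_nonneg Metric.infDist_nonneg]

theorem three_le : (3 : WithTop ℕ∞) ≤ ((⊤ : ℕ∞) : WithTop ℕ∞) := by
  have : ((3 : ℕ∞) : WithTop ℕ∞) ≤ ((⊤ : ℕ∞) : WithTop ℕ∞) := WithTop.coe_le_coe.2 le_top
  exact this

/-- the normal direction for the sup-norm -/
def nrm (r : ℂ × ℂ → ℝ) (q : ℂ × ℂ) : ℂ × ℂ :=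
  ((starRingEnd ℂ) (wdz (cf r) q) / (‖wdz (cf r) q‖ : ℂ),
   (starRingEnd ℂ) (wdw (cf r) q) / (‖wdw (cf r) q‖ : ℂ))

theorem mul_conj_div {a : ℂ} : a * ((starRingEnd ℂ) a / (‖a‖ : ℂ)) = (‖a‖ : ℂ) := by
  by_cases ha : a = 0
  · simp [ha]
  have h : (‖a‖ : ℂ) ≠ 0 := by simpa using ha
  rw [← mul_div_assoc, Complex.mul_conj, Complex.normSq_eq_norm_sq]
  push_cast
  field_simp

theorem norm_conj_div {a : ℂ} (ha : a ≠ 0) : ‖(starRingEnd ℂ) a / (‖a‖ : ℂ)‖ = 1 := by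
  simp [ha]

theorem dr_nrm {r : ℂ × ℂ → ℝ} {q : ℂ × ℂ} (hr : DifferentiableAt ℝ r q) :
    fderiv ℝ r q (nrm r q) = 2 * (‖wdz (cf r) q‖ + ‖wdw (cf r) q‖) := by
  rw [fderiv_wd hr]
  simp only [nrm, mul_conj_div]
  simp

theorem eq_of_re {a d : ℂ} {t : ℝ} (ha : a ≠ 0) (hd : ‖d‖ ≤ t) (h : ‖a‖ * t ≤ (a * d).re) :
    d = t * ((starRingEnd ℂ) a / (‖a‖ : ℂ)) := by
  have hn : ‖a * d‖ ≤ ‖a‖ * t := by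
    rw [norm_mul]; gcongr
  have h1 : (a * d).re ≤ ‖a * d‖ := Complex.re_le_norm _
  have h2 : (a * d).re = ‖a * d‖ := by linarith
  have h3 : a * d = (‖a * d‖ : ℂ) := by
    have := Complex.re_eq_norm.1 h2
    have hh := Complex.nonneg_iff.1 this
    apply Complex.ext
    · simpa using h2
    · simpa using hh.2.symm
  have h4 : ‖a * d‖ = ‖a‖ * t := by linarith
  rw [h4] at h3
  apply mul_left_cancel₀ ha
  rw [h3, mul_left_comm, mul_conj_div]
  push_cast; ring

theorem ball_disj {Ω : Set (ℂ × ℂ)} (p : ℂ × ℂ) {S : Set (ℂ × ℂ)}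
    (hS : frontier S = frontier Ω) (hp : p ∈ S) :
    Metric.ball p (Metric.infDist p (frontier Ω)) ⊆ S := by
  set t := Metric.infDist p (frontier Ω)
  intro x hx
  have hpre : IsPreconnected (Metric.ball p t) := (convex_ball p t).isPreconnected
  by_contra hxS
  have ht : 0 < t := lt_of_le_of_lt dist_nonneg hx
  have hno : ∀ y ∈ Metric.ball p t, y ∉ frontier S := by
    intro y hy hyf
    rw [hS] at hyf
    have := Metric.infDist_le_dist_of_mem (x := p) hyf
    rw [Metric.mem_ball, dist_comm] at hy
    linarith
  have hpt := Metric.mem_ball_self (x := p) ht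
  have hpi : p ∈ interior S := by
    by_contra h; exact hno p hpt ⟨subset_closure hp, h⟩
  have hxc : x ∈ (closure S)ᶜ := fun h => hno x hx ⟨h, fun h2 => hxS (interior_subset h2)⟩
  obtain ⟨y, -, hy1, hy2⟩ := hpre (interior S) (closure S)ᶜ isOpen_interior
    isClosed_closure.isOpen_compl (fun y hy => by
      by_cases h : y ∈ interior S
      · exact Or.inl h
      · exact Or.inr fun h2 => hno y hy ⟨h2, h⟩) ⟨p, hpt, hpi⟩ ⟨x, hx, hxc⟩
  exact hy2 (subset_closure (interior_subset hy1))

theorem key_min {f : ℂ × ℂ → ℝ} {p q : ℂ × ℂ} {t : ℝ} (hf : DifferentiableAt ℝ f q)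
    (ht : 0 ≤ t) (hmax : ∀ x ∈ Metric.closedBall p t, f x ≤ f q)
    (hq : dist p q = t) (ha : wdz (cf f) q ≠ 0) (hb : wdw (cf f) q ≠ 0) :
    p = q + (-t) • nrm f q := by
  have hqm : q ∈ Metric.closedBall p t := by rw [Metric.mem_closedBall, dist_comm, hq]
  have hxm : p + t • nrm f q ∈ Metric.closedBall p t := by
    rw [mem_closedBall_iff_norm, add_sub_cancel_left, norm_smul, Prod.norm_def]
    simp [nrm, ha, hb, abs_of_nonneg ht]
  have hd : fderiv ℝ f q (p + t • nrm f q - q) ≤ 0 := by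
    have hmaxon : IsMaxOn f (Metric.closedBall p t) q := hmax
    have hseg : segment ℝ q (p + t • nrm f q) ⊆ Metric.closedBall p t :=
      (convex_closedBall p t).segment_subset hqm hxm
    exact hmaxon.localize.hasFDerivWithinAt_nonpos hf.hasFDerivAt.hasFDerivWithinAt
      (sub_mem_posTangentConeAt_of_segment_subset hseg)
  rw [show p + t • nrm f q - q = (p - q) + t • nrm f q by abel, map_add, map_smul, dr_nrm hf,
    fderiv_wd hf, smul_eq_mul, Complex.add_re] at hd
  have hn : ‖p - q‖ ≤ t := by rw [← dist_eq_norm, hq]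
  have hn1 : ‖(p - q).1‖ ≤ t := (norm_fst_le _).trans hn
  have hn2 : ‖(p - q).2‖ ≤ t := (norm_snd_le _).trans hn
  have k : ∀ a d : ℂ, ‖d‖ ≤ t → -(‖a‖ * t) ≤ (a * d).re := by
    intro a d hd
    have := Complex.abs_re_le_norm (a * d)
    rw [norm_mul] at this
    have h3 : ‖a‖ * ‖d‖ ≤ ‖a‖ * t := by gcongr
    have := (abs_le.1 this).1
    linarith
  have k1 := k (wdz (cf f) q) _ hn1
  have k2 := k (wdw (cf f) q) _ hn2
  have e1 := eq_of_re (a := wdz (cf f) q) (t := t) (d := -(p - q).1) ha (by rwa [norm_neg])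
    (by rw [mul_neg, Complex.neg_re]; linarith)
  have e2 := eq_of_re (a := wdw (cf f) q) (t := t) (d := -(p - q).2) hb (by rwa [norm_neg])
    (by rw [mul_neg, Complex.neg_re]; linarith)
  ext1
  · simp only [Prod.fst_add, Prod.smul_fst, nrm, Complex.real_smul]
    simp only [Prod.fst_sub] at e1
    push_cast
    linear_combination -e1
  · simp only [Prod.snd_add, Prod.smul_snd, nrm, Complex.real_smul]
    simp only [Prod.snd_sub] at e2
    push_cast
    linear_combination -e2

theorem wdz_neg {f : ℂ × ℂ → ℝ} {q : ℂ × ℂ} (hf : DifferentiableAt ℝ f q) :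
    wdz (cf (fun x => - f x)) q = - wdz (cf f) q := by
  rw [wdz_cf hf, wdz_cf hf.fun_neg, fderiv_fun_neg]; simp; ring

theorem wdw_neg {f : ℂ × ℂ → ℝ} {q : ℂ × ℂ} (hf : DifferentiableAt ℝ f q) :
    wdw (cf (fun x => - f x)) q = - wdw (cf f) q := by
  rw [wdw_cf hf, wdw_cf hf.fun_neg, fderiv_fun_neg]; simp; ring

theorem nearest {Ω : Set (ℂ × ℂ)} {r : ℂ × ℂ → ℝ} (hr : IsDefiningFunction Ω r)
    (hopen : IsOpen Ω) (hne : (frontier Ω).Nonempty) (p : ℂ × ℂ) :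
    ∃ q ∈ frontier Ω, dist p q = |sdist Ω p| ∧
      (wdz (cf r) q ≠ 0 → wdw (cf r) q ≠ 0 → p = q + sdist Ω p • nrm r q) := by
  obtain ⟨q, hq, hdist⟩ := isClosed_frontier.exists_infDist_eq_dist hne p
  refine ⟨q, hq, by rw [abs_sdist, hdist], fun ha hb => ?_⟩
  have hc : Continuous r := hr.1.continuous
  have hdf : DifferentiableAt ℝ r q := hr.1.differentiable (by simp) q
  have hrq := frontier_zero hr hopen hq
  set t := Metric.infDist p (frontier Ω) with ht
  have ht0 : 0 ≤ t := Metric.infDist_nonneg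
  rcases ht0.eq_or_lt with h0 | hpos
  · have : p = q := by rw [← dist_eq_zero, ← hdist, ← h0]
    have h2 : sdist Ω p = 0 := by rw [← abs_eq_zero, abs_sdist, ← ht, h0]
    rw [h2, this]; simp
  by_cases hp : p ∈ Ω
  · have hs : sdist Ω p = -t := by simp [sdist, hp, ht]
    rw [hs]
    refine key_min hdf ht0 ?_ hdist.symm ha hb
    have hb := ball_disj (Ω := Ω) p (S := Ω) rfl hp
    rw [← closure_ball p hpos.ne', hrq]
    have : closure (Metric.ball p t) ⊆ {x | r x ≤ 0} :=
      closure_minimal (fun x hx => ((hr.2.1 x).1 (hb hx)).le) (isClosed_le hc continuous_const)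
    exact this
  · have hs : sdist Ω p = t := by simp [sdist, hp, ht]
    rw [hs]
    have := key_min (f := fun x => - r x) (p := p) hdf.fun_neg ht0 ?_ hdist.symm
      (by rw [wdz_neg hdf]; simpa using ha) (by rw [wdw_neg hdf]; simpa using hb)
    · rw [this]
      have hn : nrm (fun x => - r x) q = - nrm r q := by
        simp only [nrm, wdz_neg hdf, wdw_neg hdf]
        ext <;> simp [neg_div]
      rw [hn]; simp
    · have hb := ball_disj (Ω := Ω) p (S := Ωᶜ) (frontier_compl Ω) hp
      rw [← closure_ball p hpos.ne', hrq]
      have : closure (Metric.ball p t) ⊆ {x | - r x ≤ -0} :=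
        closure_minimal (fun x hx => by
          have := (hr.2.1 x).not.1 (hb hx)
          simp only [mem_ofPred_eq]; linarith) (isClosed_le hc.neg continuous_const)
      exact this

theorem contDiffAt_conj_div {f : ℂ × ℂ → ℂ} {p : ℂ × ℂ} {n : WithTop ℕ∞}
    (hf : ContDiffAt ℝ n f p) (h : f p ≠ 0) :
    ContDiffAt ℝ n (fun q => (starRingEnd ℂ) (f q) / (‖f q‖ : ℂ)) p := by
  have h1 : ContDiffAt ℝ n (fun q => (starRingEnd ℂ) (f q)) p :=
    ((Complex.conjCLE : ℂ →L[ℝ] ℂ).contDiff.contDiffAt.comp p hf :)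
  have h2 : ContDiffAt ℝ n (fun q => (‖f q‖ : ℂ)) p :=
    (Complex.ofRealCLM.contDiff.contDiffAt.comp p (hf.norm ℝ h) :)
  simp only [div_eq_mul_inv]
  exact h1.mul (h2.inv (by simpa using h))

/-- The inverse-function-theorem linear map. -/
def diagE (L : ℂ × ℂ →L[ℝ] ℝ) (N : ℂ × ℂ) (h : L N ≠ 0) :
    ((ℂ × ℂ) × ℝ) ≃L[ℝ] ((ℂ × ℂ) × ℝ) :=
  ContinuousLinearEquiv.equivOfInverse
    (((ContinuousLinearMap.fst ℝ (ℂ × ℂ) ℝ) +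
      (ContinuousLinearMap.snd ℝ (ℂ × ℂ) ℝ).smulRight N).prod
      (L.comp (ContinuousLinearMap.fst ℝ (ℂ × ℂ) ℝ)))
    (((ContinuousLinearMap.fst ℝ (ℂ × ℂ) ℝ) -
      ((L N)⁻¹ • (L.comp (ContinuousLinearMap.fst ℝ (ℂ × ℂ) ℝ) -
        ContinuousLinearMap.snd ℝ (ℂ × ℂ) ℝ)).smulRight N).prod
      ((L N)⁻¹ • (L.comp (ContinuousLinearMap.fst ℝ (ℂ × ℂ) ℝ) -
        ContinuousLinearMap.snd ℝ (ℂ × ℂ) ℝ)))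
    (by
      rintro ⟨k, τ⟩
      have h1 : (L N)⁻¹ * (L k + τ * L N - L k) = τ := by field_simp; ring
      have h2 : (L N)⁻¹ * (τ * L N) = τ := by field_simp
      simp [h2])
    (by
      rintro ⟨k, τ⟩
      have h1 : L k - (L N)⁻¹ * (L k - τ) * L N = τ := by field_simp; ring
      simp [h1])

theorem sdist_smooth {Ω : Set (ℂ × ℂ)} {r : ℂ × ℂ → ℝ} (hr : IsDefiningFunction Ω r)
    (hopen : IsOpen Ω) {p0 : ℂ × ℂ} (hp0 : p0 ∈ frontier Ω)
    (ha : wdz (cf r) p0 ≠ 0) (hb : wdw (cf r) p0 ≠ 0) :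
    ContDiffAt ℝ 2 (sdist Ω) p0 ∧
      ∃ κ : ℝ, 0 < κ ∧ ∀ v, fderiv ℝ (sdist Ω) p0 v = κ * fderiv ℝ r p0 v := by
  have hr3 : ContDiffAt ℝ 3 r p0 := hr.1.contDiffAt.of_le three_le
  have hcr := contDiffAt_cf hr3
  have haC : ContDiffAt ℝ 2 (wdz (cf r)) p0 := contDiffAt_wdz hcr (by norm_num)
  have hbC : ContDiffAt ℝ 2 (wdw (cf r)) p0 := contDiffAt_wdw hcr (by norm_num)
  have hN : ContDiffAt ℝ 2 (nrm r) p0 :=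
    (contDiffAt_conj_div haC ha).prodMk (contDiffAt_conj_div hbC hb)
  have hdr : DifferentiableAt ℝ r p0 := hr.1.differentiable (by simp) p0
  have hdN := dr_nrm hdr
  have hpos : 0 < fderiv ℝ r p0 (nrm r p0) := by
    rw [hdN]; have := norm_pos_iff.2 ha; positivity
  set G : (ℂ × ℂ) × ℝ → (ℂ × ℂ) × ℝ := fun x => (x.1 + x.2 • nrm r x.1, r x.1) with hG
  have hrfst : ContDiffAt ℝ 2 (fun x : (ℂ × ℂ) × ℝ => r x.1) (p0, 0) :=
    (ContDiffAt.comp (g := r) (p0, (0:ℝ)) (hr3.of_le (m := 2) (by norm_num)) contDiffAt_fst :)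
  have hNfst : ContDiffAt ℝ 2 (fun x : (ℂ × ℂ) × ℝ => nrm r x.1) (p0, 0) :=
    (ContDiffAt.comp (g := nrm r) (p0, (0:ℝ)) hN contDiffAt_fst :)
  have hGC : ContDiffAt ℝ 2 G (p0, 0) :=
    (contDiffAt_fst.add (contDiffAt_snd.smul hNfst)).prodMk hrfst
  have hGd : HasFDerivAt G (diagE (fderiv ℝ r p0) (nrm r p0) hpos.ne' :
      (ℂ × ℂ) × ℝ →L[ℝ] (ℂ × ℂ) × ℝ) (p0, 0) := by
    have h1 : HasFDerivAt (fun x : (ℂ × ℂ) × ℝ => r x.1) _ (p0, 0) :=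
      HasFDerivAt.comp (g := r) (p0, (0:ℝ)) hdr.hasFDerivAt hasFDerivAt_fst
    have h2 : HasFDerivAt (fun x : (ℂ × ℂ) × ℝ => nrm r x.1) _ (p0, 0) :=
      HasFDerivAt.comp (g := nrm r) (p0, (0:ℝ)) (hN.differentiableAt (by simp)).hasFDerivAt
        hasFDerivAt_fst
    have h3 := (hasFDerivAt_fst.add (hasFDerivAt_snd.smul h2)).prodMk h1
    refine h3.congr_fderiv ?_
    ext x <;> simp [diagE]
  have hst := hGC.hasStrictFDerivAt' hGd (by simp)
  have hinvC : ContDiffAt ℝ 2 (hGC.localInverse hGd (by simp)) (G (p0, 0)) :=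
    hGC.to_localInverse hGd (by simp)
  have hinvd := hst.to_localInverse
  set J := hst.localInverse G _ (p0, 0) with hJ
  have hG0 : G (p0, 0) = (p0, 0) := by simp [hG, frontier_zero hr hopen hp0]
  have hinvC' : ContDiffAt ℝ 2 J (p0, 0) := by rw [← hG0]; exact hinvC
  rw [hG0] at hinvd
  choose Q hQf hQd hQe using nearest hr hopen ⟨p0, hp0⟩
  have hsd : ∀ x, |sdist Ω x| ≤ dist x p0 := fun x => by
    rw [abs_sdist]; exact Metric.infDist_le_dist_of_mem hp0
  have hsd0 : Tendsto (sdist Ω) (𝓝 p0) (𝓝 0) := by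
    rw [tendsto_zero_iff_abs_tendsto_zero]
    refine squeeze_zero (fun x => abs_nonneg _) hsd ?_
    have : Continuous (fun x => dist x p0) := by fun_prop
    simpa using this.tendsto p0
  have hQt : Tendsto Q (𝓝 p0) (𝓝 p0) := by
    rw [tendsto_iff_dist_tendsto_zero]
    have : Continuous (fun x => dist x p0) := by fun_prop
    have h1 : Tendsto (fun x => dist x p0 + dist x p0) (𝓝 p0) (𝓝 0) := by
      simpa using (this.tendsto p0).add (this.tendsto p0)
    refine squeeze_zero (fun x => dist_nonneg) (fun x => ?_) h1
    have h2 := dist_triangle (Q x) x p0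
    have h3 := hQd x
    rw [dist_comm] at h3
    have := hsd x
    linarith
  have hev : ∀ᶠ x in 𝓝 p0, sdist Ω x = (J (x, 0)).2 := by
    have h1 : Tendsto (fun x => (Q x, sdist Ω x)) (𝓝 p0) (𝓝 (p0, 0)) := hQt.prodMk_nhds hsd0
    filter_upwards [h1.eventually hst.eventually_left_inverse,
      hQt.eventually (haC.continuousAt.eventually_ne ha),
      hQt.eventually (hbC.continuousAt.eventually_ne hb)] with x e1 e2 e3
    have e4 := hQe x e2 e3
    have e5 : G (Q x, sdist Ω x) = (x, 0) := by
      simp only [hG]; rw [← e4, frontier_zero hr hopen (hQf x)]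
    rw [e5] at e1
    rw [hJ, e1]
  have hin : ContDiffAt ℝ 2 (fun x : ℂ × ℂ => (x, (0:ℝ))) p0 :=
    contDiffAt_id.prodMk contDiffAt_const
  have hind : HasFDerivAt (fun x : ℂ × ℂ => (x, (0:ℝ))) _ p0 :=
    (hasFDerivAt_id (𝕜 := ℝ) p0).prodMk (hasFDerivAt_const (𝕜 := ℝ) (0:ℝ) p0)
  constructor
  · have h1 : ContDiffAt ℝ 2 (fun x => (J (x, 0)).2) p0 :=
      (contDiffAt_snd.comp p0 (ContDiffAt.comp (g := J) p0 hinvC' hin) :)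
    exact h1.congr_of_eventuallyEq hev
  · refine ⟨(fderiv ℝ r p0 (nrm r p0))⁻¹, inv_pos.2 hpos, fun v => ?_⟩
    have h1 : HasFDerivAt (fun x => (J (x, 0)).2) _ p0 :=
      hasFDerivAt_snd.comp p0 (HasFDerivAt.comp (g := J) p0 hinvd.hasFDerivAt hind)
    have h2 := h1.congr_of_eventuallyEq hev
    rw [h2.fderiv]
    change (fderiv ℝ r p0 (nrm r p0))⁻¹ * (fderiv ℝ r p0 v - 0) = _
    rw [sub_zero]


/-! ### The Levi form computation -/

theorem neg_along {f : ℂ × ℂ → ℝ} {p v : ℂ × ℂ} (hf : DifferentiableAt ℝ f p) (h0 : f p = 0)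
    (hv : fderiv ℝ f p v < 0) : ∀ᶠ t : ℝ in 𝓝[>] 0, f (p + t • v) < 0 := by
  have h1 : HasDerivAt (fun t : ℝ => f (p + t • v)) (fderiv ℝ f p v) 0 := by
    have h2 : HasDerivAt (fun t : ℝ => p + t • v) v 0 := by
      simpa using ((hasDerivAt_id (0:ℝ)).smul_const v).const_add p
    have h3 : HasFDerivAt f (fderiv ℝ f p) (p + (0:ℝ) • v) := by simpa using hf.hasFDerivAt
    exact h3.comp_hasDerivAt 0 h2
  have h4 := h1.tendsto_slope_zero_right
  filter_upwards [h4.eventually (gt_mem_nhds hv), self_mem_nhdsWithin] with t ht htp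
  have htp' : 0 < t := htp
  simp only [zero_add, zero_smul, add_zero, h0, sub_zero, smul_eq_mul] at ht
  by_contra h
  push Not at h
  have := mul_nonneg (inv_pos.2 htp').le h
  linarith

theorem scale_wd {f r : ℂ × ℂ → ℝ} {p : ℂ × ℂ} {k : ℝ} (hf : DifferentiableAt ℝ f p)
    (hr : DifferentiableAt ℝ r p) (h : ∀ v, fderiv ℝ f p v = k * fderiv ℝ r p v) :
    wdz (cf f) p = k * wdz (cf r) p ∧ wdw (cf f) p = k * wdw (cf r) p ∧
    wdzbar (cf f) p = k * wdzbar (cf r) p ∧ wdwbar (cf f) p = k * wdwbar (cf r) p := by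
  simp only [wdz, wdw, wdzbar, wdwbar, fderiv_cf hf, fderiv_cf hr, h]
  push_cast
  refine ⟨?_, ?_, ?_, ?_⟩ <;> ring

theorem scale_wdC {F : ℂ × ℂ → ℂ} {r : ℂ × ℂ → ℝ} {p : ℂ × ℂ} {c : ℂ}
    (hr : DifferentiableAt ℝ r p) (h : ∀ v, fderiv ℝ F p v = c * ((fderiv ℝ r p v : ℝ) : ℂ)) :
    wdz F p = c * wdz (cf r) p ∧ wdw F p = c * wdw (cf r) p := by
  simp only [wdz, wdw, fderiv_cf hr, h]
  refine ⟨?_, ?_⟩ <;> ring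

theorem prop_pos {Ω : Set (ℂ × ℂ)} {r ρ : ℂ × ℂ → ℝ} (hr : IsDefiningFunction Ω r)
    (hopen : IsOpen Ω) {V : Set (ℂ × ℂ)} (hV : IsOpen V) {p : ℂ × ℂ}
    (hd : DifferentiableAt ℝ ρ p)
    (hneg : ∀ p ∈ V, p ∈ Ω → ρ p < 0) (hz : ∀ p ∈ frontier Ω ∩ V, ρ p = 0)
    (hp : p ∈ frontier Ω ∩ V) (hne : fderiv ℝ ρ p ≠ 0) :
    ∃ μ : ℝ, 0 < μ ∧ ∀ v, fderiv ℝ ρ p v = μ * fderiv ℝ r p v := by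
  have hdr : DifferentiableAt ℝ r p := hr.1.differentiable (by simp) p
  obtain ⟨c, hc⟩ := tang hr hopen hp.1 (F := cf ρ) (diff_cf.2 hd) (by
    filter_upwards [hV.mem_nhds hp.2] with x hx hxf
    simp [cf, hz x ⟨hxf, hx⟩])
  have hcr : ∀ v, fderiv ℝ ρ p v = c.re * fderiv ℝ r p v := by
    intro v
    have h := hc v
    rw [fderiv_cf hd] at h
    have h2 := congrArg Complex.re h
    simpa using h2
  refine ⟨c.re, ?_, hcr⟩
  obtain ⟨v, hv⟩ : ∃ v, fderiv ℝ r p v < 0 := by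
    obtain ⟨v, hv⟩ : ∃ v, fderiv ℝ r p v ≠ 0 := by
      by_contra h; push Not at h; exact hr.2.2 p hp.1 (ContinuousLinearMap.ext h)
    rcases lt_or_gt_of_ne hv with h | h
    · exact ⟨v, h⟩
    · exact ⟨-v, by rw [map_neg]; linarith⟩
  have hc0 : c.re ≠ 0 := by
    intro h
    apply hne
    ext v <;> simp [hcr, h]
  rcases lt_or_gt_of_ne hc0 with h | h
  · exfalso
    have h1 := neg_along hdr (frontier_zero hr hopen hp.1) hv
    have h2 := neg_along (f := fun x => - ρ x) (v := v) hd.fun_neg (by simp [hz p hp]) (by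
      rw [fderiv_fun_neg]
      simp only [neg_apply, hcr]
      nlinarith)
    have h3 : ∀ᶠ t : ℝ in 𝓝[>] 0, p + t • v ∈ V := by
      have hct : Continuous (fun t : ℝ => p + t • v) := by fun_prop
      have : Tendsto (fun t : ℝ => p + t • v) (𝓝 0) (𝓝 p) := by simpa using hct.tendsto 0
      exact (this.mono_left nhdsWithin_le_nhds).eventually (hV.mem_nhds hp.2)
    obtain ⟨t, ⟨e1, e2⟩, e3⟩ := ((h1.and h2).and h3).exists
    have := hneg _ e3 ((hr.2.1 _).2 e1)
    linarith
  · exact h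

theorem wd_mul_sub {A B C D : ℂ × ℂ → ℂ} {p : ℂ × ℂ} (hA : DifferentiableAt ℝ A p)
    (hB : DifferentiableAt ℝ B p) (hC : DifferentiableAt ℝ C p) (hD : DifferentiableAt ℝ D p) :
    wdz (fun x => A x * B x - C x * D x) p =
      A p * wdz B p + wdz A p * B p - C p * wdz D p - wdz C p * D p ∧
    wdw (fun x => A x * B x - C x * D x) p =
      A p * wdw B p + wdw A p * B p - C p * wdw D p - wdw C p * D p := by
  have h : HasFDerivAt (fun x => A x * B x - C x * D x) _ p :=
    (hA.hasFDerivAt.mul hB.hasFDerivAt).sub (hC.hasFDerivAt.mul hD.hasFDerivAt)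
  simp only [wdz, wdw, h.fderiv]
  simp
  constructor <;> ring

theorem levi_generic {Ω : Set (ℂ × ℂ)} {r ρ : ℂ × ℂ → ℝ} (hr : IsDefiningFunction Ω r)
    (hopen : IsOpen Ω) (hpsc : IsPseudoconvex Ω) {V : Set (ℂ × ℂ)} (hV : IsOpen V)
    (hρ : ∀ p ∈ V, ContDiffAt ℝ 3 ρ p)
    (hneg : ∀ p ∈ V, p ∈ Ω → ρ p < 0) (hz : ∀ p ∈ frontier Ω ∩ V, ρ p = 0)
    (hρz : ∀ p ∈ frontier Ω ∩ V, wdz (cf ρ) p ≠ 0)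
    (h1 : ∀ p ∈ frontier Ω ∩ V, wdz (wdzbar (cf ρ)) p = 0)
    (h2 : ∀ p ∈ frontier Ω ∩ V, wdw (wdzbar (cf ρ)) p = 0)
    (h3 : ∀ p ∈ frontier Ω ∩ V, wdz (wdwbar (cf ρ)) p = 0)
    {p : ℂ × ℂ} (hp : p ∈ frontier Ω ∩ V) (hw : wdw (cf ρ) p ≠ 0) :
    0 ≤ (wdw (wdwbar (cf ρ)) p).re := by
  have hdρ : ∀ q ∈ V, DifferentiableAt ℝ ρ q := fun q hq => (hρ q hq).differentiableAt (by simp)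
  have hdr : ∀ q, DifferentiableAt ℝ r q := hr.1.differentiable (by simp)
  have hfne : ∀ q ∈ frontier Ω ∩ V, fderiv ℝ ρ q ≠ 0 := by
    intro q hq h
    apply hρz q hq
    rw [wdz_cf (hdρ q hq.2), h]; simp
  have hμ := fun q (hq : q ∈ frontier Ω ∩ V) =>
    prop_pos hr hopen hV (hdρ q hq.2) hneg hz hq (hfne q hq)
  obtain ⟨μ, hμ0, hμp⟩ := hμ p hp
  obtain ⟨e1, e2, e3, e4⟩ := scale_wd (hdρ p hp.2) (hdr p) hμp
  have hrz : wdz (cf r) p ≠ 0 := by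
    intro h; apply hρz p hp; rw [e1, h, mul_zero]
  have hrw : wdw (cf r) p ≠ 0 := by
    intro h; apply hw; rw [e2, h, mul_zero]
  obtain ⟨hδ, κ, hκ, hκp⟩ := sdist_smooth hr hopen hp.1 hrz hrw
  have hδc := contDiffAt_cf hδ
  have hρc := contDiffAt_cf (hρ p hp.2)
  have dA : DifferentiableAt ℝ (wdzbar (cf (sdist Ω))) p :=
    (contDiffAt_wdzbar hδc (m := 1) (by norm_num)).differentiableAt (by simp)
  have dC : DifferentiableAt ℝ (wdwbar (cf (sdist Ω))) p :=
    (contDiffAt_wdwbar hδc (m := 1) (by norm_num)).differentiableAt (by simp)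
  have dB : DifferentiableAt ℝ (wdwbar (cf ρ)) p :=
    (contDiffAt_wdwbar hρc (m := 2) (by norm_num)).differentiableAt (by simp)
  have dD : DifferentiableAt ℝ (wdzbar (cf ρ)) p :=
    (contDiffAt_wdzbar hρc (m := 2) (by norm_num)).differentiableAt (by simp)
  have hcr := contDiffAt_cf (hr.1.contDiffAt (x := p))
  have cz : ∀ᶠ q in 𝓝 p, wdz (cf r) q ≠ 0 :=
    (contDiffAt_wdz hcr (m := 0) (by simp)).continuousAt.eventually_ne hrz
  have cw : ∀ᶠ q in 𝓝 p, wdw (cf r) q ≠ 0 :=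
    (contDiffAt_wdw hcr (m := 0) (by simp)).continuousAt.eventually_ne hrw
  set F : ℂ × ℂ → ℂ := fun x => wdzbar (cf (sdist Ω)) x * wdwbar (cf ρ) x
    - wdwbar (cf (sdist Ω)) x * wdzbar (cf ρ) x with hF
  have hF0 : ∀ᶠ x in 𝓝 p, x ∈ frontier Ω → F x = 0 := by
    filter_upwards [cz, cw, hV.mem_nhds hp.2] with q q1 q2 q3 q4
    obtain ⟨hδq, κ', -, hκq⟩ := sdist_smooth hr hopen q4 q1 q2
    obtain ⟨μ', -, hμq⟩ := hμ q ⟨q4, q3⟩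
    obtain ⟨-, -, f3, f4⟩ := scale_wd (hdρ q q3) (hdr q) hμq
    obtain ⟨-, -, g3, g4⟩ := scale_wd (hδq.differentiableAt (by simp)) (hdr q) hκq
    simp only [hF]
    rw [f3, f4, g3, g4]; ring
  have hFd : DifferentiableAt ℝ F p := (dA.mul dB).sub (dC.mul dD)
  obtain ⟨c, hc⟩ := tang hr hopen hp.1 hFd hF0
  obtain ⟨w1, w2⟩ := scale_wdC (hdr p) hc
  obtain ⟨m1, m2⟩ := wd_mul_sub dA dB dC dD
  rw [m1, h1 p hp, h3 p hp] at w1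
  rw [m2, h2 p hp] at w2
  have hδd := hδ.differentiableAt (n := 2) (by simp)
  obtain ⟨g1, g2, g3, g4⟩ := scale_wd hδd (hdr p) hκp
  have hps := hpsc p hp.1 (wdw (cf ρ) p) (- wdz (cf ρ) p) (by
    rw [IsComplexTangent, g1, g2, e1, e2]; ring)
  have hzb := wdzbar_cf (hdρ p hp.2)
  have hwb := wdwbar_cf (hdρ p hp.2)
  have hgl : wdzbar (cf (sdist Ω)) p = (κ / μ : ℝ) * wdzbar (cf ρ) p := by
    have hμC : (μ : ℂ) ≠ 0 := by exact_mod_cast hμ0.ne'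
    rw [g3, e3]; push_cast; field_simp
  have key : wdz (wdzbar (cf (sdist Ω))) p * wdw (cf ρ) p * (starRingEnd ℂ) (wdw (cf ρ) p)
    + wdz (wdwbar (cf (sdist Ω))) p * wdw (cf ρ) p * (starRingEnd ℂ) (- wdz (cf ρ) p)
    + wdw (wdzbar (cf (sdist Ω))) p * (- wdz (cf ρ) p) * (starRingEnd ℂ) (wdw (cf ρ) p)
    + wdw (wdwbar (cf (sdist Ω))) p * (- wdz (cf ρ) p) * (starRingEnd ℂ) (- wdz (cf ρ) p)
    = ((κ / μ * Complex.normSq (wdz (cf ρ) p) : ℝ) : ℂ) * wdw (wdwbar (cf ρ)) p := by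
    have hx : wdw (cf ρ) p * (c * wdz (cf r) p) - wdz (cf ρ) p * (c * wdw (cf r) p) = 0 := by
      rw [e1, e2]; ring
    rw [← w1, ← w2, hgl] at hx
    push_cast
    rw [Complex.normSq_eq_conj_mul_self, map_neg, ← hzb, ← hwb]
    push_cast at hx
    linear_combination hx
  rw [cHess, key, Complex.re_ofReal_mul] at hps
  have hpos : 0 < κ / μ * Complex.normSq (wdz (cf ρ) p) :=
    mul_pos (div_pos hκ hμ0) (Complex.normSq_pos.2 (hρz p hp))
  exact nonneg_of_mul_nonneg_right hps hpos

theorem levi {Ω : Set (ℂ × ℂ)} {r ρ : ℂ × ℂ → ℝ} (hr : IsDefiningFunction Ω r)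
    (hopen : IsOpen Ω) (hpsc : IsPseudoconvex Ω) {V : Set (ℂ × ℂ)} (hV : IsOpen V)
    (hρ : ∀ p ∈ V, ContDiffAt ℝ 3 ρ p)
    (hneg : ∀ p ∈ V, p ∈ Ω → ρ p < 0) (hz : ∀ p ∈ frontier Ω ∩ V, ρ p = 0)
    (hρz : ∀ p ∈ frontier Ω ∩ V, wdz (cf ρ) p ≠ 0)
    (h1 : ∀ p ∈ frontier Ω ∩ V, wdz (wdzbar (cf ρ)) p = 0)
    (h2 : ∀ p ∈ frontier Ω ∩ V, wdw (wdzbar (cf ρ)) p = 0)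
    (h3 : ∀ p ∈ frontier Ω ∩ V, wdz (wdwbar (cf ρ)) p = 0)
    {p : ℂ × ℂ} (hp : p ∈ frontier Ω ∩ V) (ξ η : ℂ) :
    0 ≤ cHess ρ p ξ η := by
  have hmain : 0 ≤ (wdw (wdwbar (cf ρ)) p).re := by
    have hdρ := fun q (hq : q ∈ V) => (hρ q hq).differentiableAt (n := 3) (by simp)
    by_cases hcl : ∀ᶠ x in 𝓝 p, x ∈ frontier Ω → wdw (cf ρ) x = 0
    · have hρc := contDiffAt_cf (hρ p hp.2)
      have dB : DifferentiableAt ℝ (wdwbar (cf ρ)) p :=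
        (contDiffAt_wdwbar hρc (m := 2) (by norm_num)).differentiableAt (by simp)
      have hB0 : ∀ᶠ x in 𝓝 p, x ∈ frontier Ω → wdwbar (cf ρ) x = 0 := by
        filter_upwards [hcl, hV.mem_nhds hp.2] with x x1 x2 x3
        rw [wdwbar_cf (hdρ x x2), x1 x3, map_zero]
      obtain ⟨c, hc⟩ := tang hr hopen hp.1 dB hB0
      have hdr : DifferentiableAt ℝ r p := hr.1.differentiable (by simp) p
      obtain ⟨-, w2⟩ := scale_wdC hdr hc
      have hfne : fderiv ℝ ρ p ≠ 0 := by
        intro h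
        apply hρz p hp
        rw [wdz_cf (hdρ p hp.2), h]; simp
      obtain ⟨μ, hμ0, hμp⟩ := prop_pos hr hopen hV (hdρ p hp.2) hneg hz hp hfne
      obtain ⟨-, e2, -, -⟩ := scale_wd (hdρ p hp.2) hdr hμp
      rw [hcl.self_of_nhds hp.1] at e2
      have : wdw (cf r) p = 0 := by
        rcases mul_eq_zero.1 e2.symm with h | h
        · exact absurd h (by exact_mod_cast hμ0.ne')
        · exact h
      rw [w2, this]; simp
    · rw [Filter.not_eventually] at hcl
      have hcont : ContinuousAt (fun q => (wdw (wdwbar (cf ρ)) q).re) p := by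
        have hρc := contDiffAt_cf (hρ p hp.2)
        have := (contDiffAt_wdw (contDiffAt_wdwbar hρc (m := 2) (by norm_num)) (m := 1)
          (by norm_num)).continuousAt
        exact Complex.continuous_re.continuousAt.comp this
      by_contra hlt
      push Not at hlt
      obtain ⟨q, ⟨q1, q2⟩, q3⟩ := (hcl.and_eventually
        (hV.mem_nhds hp.2)).and_eventually (hcont.eventually (gt_mem_nhds hlt)) |>.exists
      push Not at q1
      have := levi_generic hr hopen hpsc hV hρ hneg hz hρz h1 h2 h3 (p := q) ⟨q1.1, q2⟩ q1.2
      linarith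
  rw [cHess, h1 p hp, h2 p hp, h3 p hp]
  have : wdw (wdwbar (cf ρ)) p * η * (starRingEnd ℂ) η =
      ((Complex.normSq η : ℝ) : ℂ) * wdw (wdwbar (cf ρ)) p := by
    rw [Complex.normSq_eq_conj_mul_self]; ring
  rw [this]
  simp only [zero_mul, zero_add, Complex.re_ofReal_mul]
  exact mul_nonneg (Complex.normSq_nonneg η) hmain

/-! ### Rotations -/

/-- Rotation in the first variable. -/
def rotE (θ : ℝ) : (ℂ × ℂ) ≃L[ℝ] (ℂ × ℂ) :=
  (rotation (Circle.exp θ)).toContinuousLinearEquiv.prodCongr (ContinuousLinearEquiv.refl ℝ ℂ)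

theorem rotE_apply (θ : ℝ) (p : ℂ × ℂ) : rotE θ p = (Complex.exp (θ * Complex.I) * p.1, p.2) := by
  simp [rotE, rotation_apply]

theorem rotE_isometry (θ : ℝ) : Isometry (rotE θ) := by
  apply AddMonoidHomClass.isometry_of_norm
  intro p
  rw [rotE_apply, Prod.norm_def, Prod.norm_def]
  simp [Complex.norm_exp_ofReal_mul_I]

theorem rotE_neg (θ : ℝ) (p : ℂ × ℂ) : rotE (-θ) (rotE θ p) = p := by
  rw [rotE_apply, rotE_apply]
  ext
  · simp only
    rw [← mul_assoc, ← Complex.exp_add]; simp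
  · rfl

theorem rotE_mem {Ω : Set (ℂ × ℂ)} (hH : IsHartogs Ω) (θ : ℝ) (p : ℂ × ℂ) :
    rotE θ p ∈ Ω ↔ p ∈ Ω := by
  constructor
  · intro h
    have := hH (rotE θ p).1 (rotE θ p).2 (-θ) h
    have h2 := rotE_neg θ p
    rw [rotE_apply] at h2
    rw [h2] at this
    exact this
  · intro h
    rw [rotE_apply]
    exact hH p.1 p.2 θ h

theorem rotE_frontier {Ω : Set (ℂ × ℂ)} (hH : IsHartogs Ω) (θ : ℝ) :
    rotE θ ⁻¹' frontier Ω = frontier Ω := by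
  have h := (rotE θ).toHomeomorph.preimage_frontier Ω
  have h2 : rotE θ ⁻¹' Ω = Ω := by ext p; exact rotE_mem hH θ p
  have h3 : rotE θ ⁻¹' frontier Ω = frontier (rotE θ ⁻¹' Ω) := h
  rw [h3, h2]

theorem rotE_sdist {Ω : Set (ℂ × ℂ)} (hH : IsHartogs Ω) (θ : ℝ) (p : ℂ × ℂ) :
    sdist Ω (rotE θ p) = sdist Ω p := by
  have h1 : rotE θ '' frontier Ω = frontier Ω := by
    conv_lhs => rw [← rotE_frontier hH θ]
    exact Set.image_preimage_eq _ (rotE θ).surjective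
  have h2 : Metric.infDist (rotE θ p) (frontier Ω) = Metric.infDist p (frontier Ω) := by
    conv_lhs => rw [← h1]
    exact Metric.infDist_image (rotE_isometry θ)
  simp only [sdist, rotE_mem hH, h2]

theorem rotE_arg (z w : ℂ) : rotE (Complex.arg z) ((‖z‖ : ℂ), w) = (z, w) := by
  rw [rotE_apply]
  ext
  · simp only
    rw [mul_comm]
    exact Complex.norm_mul_exp_arg_mul_I z
  · rfl

theorem rot_diff {Ω : Set (ℂ × ℂ)} (hH : IsHartogs Ω) (θ : ℝ) {q : ℂ × ℂ}
    (hd : DifferentiableAt ℝ (sdist Ω) (rotE θ q)) :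
    HasFDerivAt (sdist Ω) ((fderiv ℝ (sdist Ω) (rotE θ q)).comp
      (rotE θ : (ℂ × ℂ) →L[ℝ] (ℂ × ℂ))) q := by
  have h := hd.hasFDerivAt.comp q (rotE θ).hasFDerivAt
  have h2 : sdist Ω ∘ rotE θ = sdist Ω := funext fun x => rotE_sdist hH θ x
  rwa [h2] at h

/-! ### The construction -/

/-- `r` in logarithmic coordinates. -/
def gg (r : ℂ × ℂ → ℝ) (y : ℝ × ℂ) : ℝ := r ((Real.exp y.1 : ℂ), y.2)

/-- The derivative in the first variable. -/
def du (f : ℝ × ℂ → ℝ) (y : ℝ × ℂ) : ℝ := fderiv ℝ f y (1, 0)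

/-- First derivative. -/
def aa (r : ℂ × ℂ → ℝ) : ℝ × ℂ → ℝ := du (gg r)

/-- Correction coefficient. -/
def cc (r : ℂ × ℂ → ℝ) (y : ℝ × ℂ) : ℝ := du (aa r) y * (2 * aa r y ^ 3)⁻¹

/-- The normalized function. -/
def ss (r : ℂ × ℂ → ℝ) (y : ℝ × ℂ) : ℝ := gg r y * (aa r y)⁻¹ + cc r y * gg r y ^ 2

/-- Logarithmic coordinates. -/
def lam (p : ℂ × ℂ) : ℝ × ℂ := (Real.log (p.1.re ^ 2 + p.1.im ^ 2) / 2, p.2)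

theorem gg_smooth {r : ℂ × ℂ → ℝ} (hr : ContDiff ℝ (⊤ : ℕ∞) r) : ContDiff ℝ (⊤ : ℕ∞) (gg r) := by
  have h1 : ContDiff ℝ (⊤ : ℕ∞) (fun y : ℝ × ℂ => ((Real.exp y.1 : ℝ) : ℂ)) :=
    Complex.ofRealCLM.contDiff.comp (Real.contDiff_exp.comp contDiff_fst)
  exact (hr.comp (h1.prodMk contDiff_snd) :)

theorem du_smooth {f : ℝ × ℂ → ℝ} {y : ℝ × ℂ} (hf : ContDiffAt ℝ (⊤ : ℕ∞) f y) :
    ContDiffAt ℝ (⊤ : ℕ∞) (du f) y :=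
  (hf.fderiv_right (m := ((⊤ : ℕ∞) : WithTop ℕ∞)) (by simp)).clm_apply contDiffAt_const

theorem aa_smooth {r : ℂ × ℂ → ℝ} (hr : ContDiff ℝ (⊤ : ℕ∞) r) (y : ℝ × ℂ) :
    ContDiffAt ℝ (⊤ : ℕ∞) (aa r) y := du_smooth (gg_smooth hr).contDiffAt

theorem cc_smooth {r : ℂ × ℂ → ℝ} (hr : ContDiff ℝ (⊤ : ℕ∞) r) {y : ℝ × ℂ} (hy : aa r y ≠ 0) :
    ContDiffAt ℝ (⊤ : ℕ∞) (cc r) y := by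
  have ha := aa_smooth hr y
  exact (du_smooth ha).mul ((contDiffAt_const.mul (ha.pow 3)).inv (by simpa using hy))

theorem ss_smooth {r : ℂ × ℂ → ℝ} (hr : ContDiff ℝ (⊤ : ℕ∞) r) {y : ℝ × ℂ} (hy : aa r y ≠ 0) :
    ContDiffAt ℝ (⊤ : ℕ∞) (ss r) y := by
  have hg := (gg_smooth hr).contDiffAt (x := y)
  exact (hg.mul ((aa_smooth hr y).inv hy)).add ((cc_smooth hr hy).mul (hg.pow 2))

theorem du_ss {r : ℂ × ℂ → ℝ} (hr : ContDiff ℝ (⊤ : ℕ∞) r) {y : ℝ × ℂ} (hy : aa r y ≠ 0) :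
    du (ss r) y = 1 + gg r y ^ 2 * du (cc r) y := by
  have hg := (((gg_smooth hr).contDiffAt (x := y)).differentiableAt (by simp)).hasFDerivAt
  have ha := ((aa_smooth hr y).differentiableAt (by simp)).hasFDerivAt
  have hc := ((cc_smooth hr hy).differentiableAt (by simp)).hasFDerivAt
  have hi : HasFDerivAt (fun x => (aa r x)⁻¹) (-((aa r y) ^ 2)⁻¹ • fderiv ℝ (aa r) y) y :=
    (hasDerivAt_inv hy).comp_hasFDerivAt y ha
  have h : HasFDerivAt (ss r) _ y := (hg.mul hi).add (hc.mul (hg.pow 2))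
  have e1 : fderiv ℝ (gg r) y (1, 0) = aa r y := rfl
  have e2 : fderiv ℝ (aa r) y (1, 0) = du (aa r) y := rfl
  have e3 : fderiv ℝ (cc r) y (1, 0) = du (cc r) y := rfl
  have e4 : cc r y = du (aa r) y * (2 * aa r y ^ 3)⁻¹ := rfl
  rw [du, h.fderiv]
  simp [e1, e2, e3]
  rw [e4]
  field_simp
  ring

theorem normSq_pos' {z : ℂ} (hz : z ≠ 0) : 0 < z.re ^ 2 + z.im ^ 2 := by
  have := Complex.normSq_pos.2 hz
  rw [Complex.normSq_apply] at this
  nlinarith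

theorem lam_smooth {p : ℂ × ℂ} (hp : p.1 ≠ 0) : ContDiffAt ℝ (⊤ : ℕ∞) lam p := by
  have h1 : ContDiff ℝ (⊤ : ℕ∞) (fun p : ℂ × ℂ => p.1.re) :=
    (Complex.reCLM.comp (ContinuousLinearMap.fst ℝ ℂ ℂ)).contDiff
  have h2 : ContDiff ℝ (⊤ : ℕ∞) (fun p : ℂ × ℂ => p.1.im) :=
    (Complex.imCLM.comp (ContinuousLinearMap.fst ℝ ℂ ℂ)).contDiff
  have h3 : ContDiffAt ℝ (⊤ : ℕ∞) (fun p : ℂ × ℂ => p.1.re ^ 2 + p.1.im ^ 2) p :=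
    ((h1.pow 2).add (h2.pow 2)).contDiffAt (x := p)
  exact ((h3.log (normSq_pos' hp).ne').div_const 2).prodMk contDiffAt_snd

theorem lam_deriv {p : ℂ × ℂ} (hp : p.1 ≠ 0) (h : ℂ) : fderiv ℝ lam p (h, 0) =
    ((p.1.re * h.re + p.1.im * h.im) / (p.1.re ^ 2 + p.1.im ^ 2)) • ((1 : ℝ), (0 : ℂ)) := by
  have h1 : HasFDerivAt (fun p : ℂ × ℂ => p.1.re)
      (Complex.reCLM.comp (ContinuousLinearMap.fst ℝ ℂ ℂ)) p :=
    (Complex.reCLM.comp (ContinuousLinearMap.fst ℝ ℂ ℂ)).hasFDerivAt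
  have h2 : HasFDerivAt (fun p : ℂ × ℂ => p.1.im)
      (Complex.imCLM.comp (ContinuousLinearMap.fst ℝ ℂ ℂ)) p :=
    (Complex.imCLM.comp (ContinuousLinearMap.fst ℝ ℂ ℂ)).hasFDerivAt
  have hs : HasFDerivAt (fun p : ℂ × ℂ => p.2) (ContinuousLinearMap.snd ℝ ℂ ℂ) p := hasFDerivAt_snd
  have h3 : HasFDerivAt lam _ p :=
    ((((h1.pow 2).add (h2.pow 2)).log (normSq_pos' hp).ne').mul_const (2:ℝ)⁻¹).prodMk hs
  rw [h3.fderiv]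
  have := (normSq_pos' hp).ne'
  ext
  · simp
    field_simp
  · simp

theorem gg_lam (r : ℂ × ℂ → ℝ) {p : ℂ × ℂ} (hp : p.1 ≠ 0) :
    gg r (lam p) = r ((‖p.1‖ : ℂ), p.2) := by
  have : Real.exp (Real.log (p.1.re ^ 2 + p.1.im ^ 2) / 2) = ‖p.1‖ := by
    have h : p.1.re ^ 2 + p.1.im ^ 2 = ‖p.1‖ ^ 2 := by
      rw [Complex.sq_norm, Complex.normSq_apply]; ring
    rw [h, Real.log_pow]
    push_cast
    rw [mul_div_cancel_left₀ _ two_ne_zero, Real.exp_log (norm_pos_iff.2 hp)]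
  simp only [gg, lam, this]

/-- The sign. -/
def sgn (x : ℝ) : ℝ := if 0 < x then 1 else -1

theorem sgn_pos {x : ℝ} (hx : x ≠ 0) : 0 < sgn x * x⁻¹ := by
  unfold sgn
  split_ifs with h
  · simpa using h
  · have : x < 0 := lt_of_le_of_ne (not_lt.1 h) hx
    have := inv_lt_zero.2 this
    linarith

theorem sgn_ne (x : ℝ) : sgn x ≠ 0 := by
  unfold sgn; split_ifs <;> simp

theorem sgn_ev {f : ℂ × ℂ → ℝ} {p : ℂ × ℂ} (hf : ContinuousAt f p) (h : f p ≠ 0) :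
    ∀ᶠ x in 𝓝 p, sgn (f x) = sgn (f p) := by
  rcases lt_or_gt_of_ne h with h | h
  · filter_upwards [hf.eventually (gt_mem_nhds h)] with x hx
    rw [sgn, sgn, if_neg (not_lt.2 hx.le), if_neg (not_lt.2 h.le)]
  · filter_upwards [hf.eventually (lt_mem_nhds h)] with x hx
    rw [sgn, sgn, if_pos hx, if_pos h]

/-- The local defining function. -/
def rho (r : ℂ × ℂ → ℝ) (p : ℂ × ℂ) : ℝ := sgn (aa r (lam p)) * ss r (lam p)

/-- The neighborhood. -/
def VV (r : ℂ × ℂ → ℝ) : Set (ℂ × ℂ) :=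
  {p | p.1 ≠ 0 ∧ aa r (lam p) ≠ 0 ∧ 0 < 1 + cc r (lam p) * aa r (lam p) * gg r (lam p)}

theorem comp_lam {f : ℝ × ℂ → ℝ} {p : ℂ × ℂ} (hp : p.1 ≠ 0)
    (hf : ContDiffAt ℝ (⊤ : ℕ∞) f (lam p)) : ContDiffAt ℝ (⊤ : ℕ∞) (fun x => f (lam x)) p :=
  (ContDiffAt.comp (g := f) p hf (lam_smooth hp) :)

theorem VV_open {r : ℂ × ℂ → ℝ} (hr : ContDiff ℝ (⊤ : ℕ∞) r) : IsOpen (VV r) := by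
  rw [isOpen_iff_mem_nhds]
  rintro p ⟨h1, h2, h3⟩
  have ca := comp_lam h1 (aa_smooth hr (lam p))
  have ccc := comp_lam h1 (cc_smooth hr h2)
  have cg := comp_lam h1 (gg_smooth hr).contDiffAt
  have c3 : ContinuousAt
      (fun p => 1 + cc r (lam p) * aa r (lam p) * gg r (lam p)) p :=
    continuousAt_const.add ((ccc.continuousAt.mul ca.continuousAt).mul cg.continuousAt)
  filter_upwards [continuous_fst.continuousAt.eventually_ne h1,
    ca.continuousAt.eventually_ne h2, c3.eventually (lt_mem_nhds h3)] with x x1 x2 x3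
  exact ⟨x1, x2, x3⟩

theorem rho_ev {r : ℂ × ℂ → ℝ} (hr : ContDiff ℝ (⊤ : ℕ∞) r) {p : ℂ × ℂ} (hp : p ∈ VV r) :
    rho r =ᶠ[𝓝 p] fun x => sgn (aa r (lam p)) * ss r (lam x) := by
  have ca := comp_lam hp.1 (aa_smooth hr (lam p))
  filter_upwards [sgn_ev ca.continuousAt hp.2.1] with x hx
  rw [rho, hx]

theorem rho_smooth {r : ℂ × ℂ → ℝ} (hr : ContDiff ℝ (⊤ : ℕ∞) r) {p : ℂ × ℂ} (hp : p ∈ VV r) :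
    ContDiffAt ℝ (⊤ : ℕ∞) (rho r) p :=
  (contDiffAt_const.mul (comp_lam hp.1 (ss_smooth hr hp.2.1))).congr_of_eventuallyEq (rho_ev hr hp)

theorem rho_wdzbar {r : ℂ × ℂ → ℝ} (hr : ContDiff ℝ (⊤ : ℕ∞) r) {p : ℂ × ℂ} (hp : p ∈ VV r) :
    wdzbar (cf (rho r)) p = ((sgn (aa r (lam p)) : ℝ) : ℂ) / 2 *
      (1 + ((gg r (lam p) : ℝ) : ℂ) ^ 2 * ((du (cc r) (lam p) : ℝ) : ℂ)) *
        ((starRingEnd ℂ) p.1)⁻¹ := by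
  have hd := (rho_smooth hr hp).differentiableAt (by simp)
  have h1 : HasFDerivAt (fun x => ss r (lam x)) _ p :=
    HasFDerivAt.comp (g := ss r) p ((ss_smooth hr hp.2.1).differentiableAt (by simp)).hasFDerivAt
      ((lam_smooth hp.1).differentiableAt (by simp)).hasFDerivAt
  have h2 := (h1.const_mul (sgn (aa r (lam p)))).congr_of_eventuallyEq (rho_ev hr hp)
  have h3 : ∀ h : ℂ, fderiv ℝ (rho r) p (h, 0) = sgn (aa r (lam p)) *
      ((p.1.re * h.re + p.1.im * h.im) / (p.1.re ^ 2 + p.1.im ^ 2) *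
      (1 + gg r (lam p) ^ 2 * du (cc r) (lam p))) := by
    intro h
    rw [h2.fderiv, ← du_ss hr hp.2.1]
    simp only [smul_apply, ContinuousLinearMap.comp_apply]
    rw [lam_deriv hp.1, map_smul]
    rfl
  have hz : (starRingEnd ℂ) p.1 ≠ 0 := by simpa using hp.1
  have hn : ((p.1.re ^ 2 + p.1.im ^ 2 : ℝ) : ℂ) = p.1 * (starRingEnd ℂ) p.1 := by
    rw [Complex.mul_conj, Complex.normSq_apply]; push_cast; ring
  have hre : (p.1.re : ℂ) + Complex.I * p.1.im = p.1 := by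
    rw [mul_comm]; exact Complex.re_add_im p.1
  rw [wdzbar, fderiv_cf hd, fderiv_cf hd, h3, h3]
  rw [Complex.ofReal_mul, Complex.ofReal_mul, Complex.ofReal_mul, Complex.ofReal_mul,
    Complex.ofReal_div, Complex.ofReal_div, hn]
  simp
  have hp1 := hp.1
  field_simp
  linear_combination (((sgn (aa r (lam p)) : ℝ) : ℂ) *
      (1 + ((gg r (lam p) : ℝ) : ℂ) ^ 2 * ((du (cc r) (lam p) : ℝ) : ℂ))) * hre

theorem gg_frontier {Ω : Set (ℂ × ℂ)} {r : ℂ × ℂ → ℝ} (hr : IsDefiningFunction Ω r)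
    (hopen : IsOpen Ω) (hH : IsHartogs Ω) {p : ℂ × ℂ} (hp : p ∈ frontier Ω) (hz : p.1 ≠ 0) :
    ((‖p.1‖ : ℂ), p.2) ∈ frontier Ω ∧ gg r (lam p) = 0 := by
  have h : ((‖p.1‖ : ℂ), p.2) ∈ frontier Ω := by
    rw [← rotE_frontier hH (Complex.arg p.1), Set.mem_preimage, rotE_arg]
    exact hp
  exact ⟨h, by rw [gg_lam r hz]; exact frontier_zero hr hopen h⟩

theorem rho_neg {Ω : Set (ℂ × ℂ)} {r : ℂ × ℂ → ℝ} (hr : IsDefiningFunction Ω r)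
    (hH : IsHartogs Ω) {p : ℂ × ℂ} (hp : p ∈ VV r) : p ∈ Ω ↔ rho r p < 0 := by
  have h1 : p ∈ Ω ↔ gg r (lam p) < 0 := by
    rw [gg_lam r hp.1, ← hr.2.1, ← rotE_mem hH (Complex.arg p.1) ((‖p.1‖ : ℂ), p.2), rotE_arg]
  have ha := hp.2.1
  have h2 : rho r p = (sgn (aa r (lam p)) * (aa r (lam p))⁻¹ *
      (1 + cc r (lam p) * aa r (lam p) * gg r (lam p))) * gg r (lam p) := by
    rw [rho, ss]
    field_simp
  have h3 := mul_pos (sgn_pos ha) hp.2.2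
  rw [h1, h2]
  constructor
  · intro h; exact mul_neg_of_pos_of_neg h3 h
  · intro h
    by_contra h4
    have := mul_nonneg h3.le (not_lt.1 h4)
    linarith

theorem rho_mixed {r : ℂ × ℂ → ℝ} (hr : ContDiff ℝ (⊤ : ℕ∞) r) {p : ℂ × ℂ} (hp : p ∈ VV r)
    (h0 : gg r (lam p) = 0) :
    wdz (wdzbar (cf (rho r))) p = 0 ∧ wdw (wdzbar (cf (rho r))) p = 0 := by
  set s := ((sgn (aa r (lam p)) : ℝ) : ℂ) / 2 with hs
  have hev : wdzbar (cf (rho r)) =ᶠ[𝓝 p] fun x => s *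
      (1 + ((gg r (lam x) : ℝ) : ℂ) ^ 2 * ((du (cc r) (lam x) : ℝ) : ℂ)) *
        ((starRingEnd ℂ) x.1)⁻¹ := by
    have ca := comp_lam hp.1 (aa_smooth hr (lam p))
    filter_upwards [sgn_ev ca.continuousAt hp.2.1, (VV_open hr).mem_nhds hp] with x hx hxV
    rw [rho_wdzbar hr hxV, hx]
  have dG : DifferentiableAt ℝ (cf fun x => gg r (lam x)) p :=
    diff_cf.2 ((comp_lam hp.1 (gg_smooth hr).contDiffAt).differentiableAt (by simp))
  have dE : DifferentiableAt ℝ (cf fun x => du (cc r) (lam x)) p :=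
    diff_cf.2 ((comp_lam hp.1 (du_smooth (cc_smooth hr hp.2.1))).differentiableAt (by simp))
  have hz : (starRingEnd ℂ) p.1 ≠ 0 := by simpa using hp.1
  have hconj : HasFDerivAt (fun x : ℂ × ℂ => (starRingEnd ℂ) x.1)
      ((Complex.conjCLE : ℂ →L[ℝ] ℂ).comp (ContinuousLinearMap.fst ℝ ℂ ℂ)) p :=
    ((Complex.conjCLE : ℂ →L[ℝ] ℂ).comp (ContinuousLinearMap.fst ℝ ℂ ℂ)).hasFDerivAt
  have hinv : HasFDerivAt (fun x : ℂ × ℂ => ((starRingEnd ℂ) x.1)⁻¹) _ p :=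
    HasFDerivAt.comp (g := fun z : ℂ => z⁻¹) p
      ((hasDerivAt_inv hz).hasFDerivAt.restrictScalars ℝ) hconj
  have hmain : HasFDerivAt (wdzbar (cf (rho r))) _ p :=
    HasFDerivAt.congr_of_eventuallyEq
      (((((dG.hasFDerivAt.pow 2).mul dE.hasFDerivAt).const_add 1).const_mul s).mul hinv) hev
  have hcf : cf (fun x => gg r (lam x)) p = 0 := by simp [cf, h0]
  simp only [wdz, wdw, hmain.fderiv]
  simp [hcf]
  ring_nf
  simp

theorem rho_wdz_ne {r : ℂ × ℂ → ℝ} (hr : ContDiff ℝ (⊤ : ℕ∞) r) {p : ℂ × ℂ} (hp : p ∈ VV r)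
    (h0 : gg r (lam p) = 0) : wdz (cf (rho r)) p ≠ 0 := by
  intro h
  have h1 := rho_wdzbar hr hp
  rw [wdzbar_cf ((rho_smooth hr hp).differentiableAt (by simp)), h, h0] at h1
  have := sgn_ne (aa r (lam p))
  have hp1 := hp.1
  simp [this, hp1] at h1

theorem rho_mixed3 {r : ℂ × ℂ → ℝ} (hr : ContDiff ℝ (⊤ : ℕ∞) r) {p : ℂ × ℂ} (hp : p ∈ VV r)
    (h0 : gg r (lam p) = 0) : wdz (wdwbar (cf (rho r))) p = 0 := by
  have hc := contDiffAt_cf ((rho_smooth hr hp).of_le three_le)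
  rw [wdz_wdwbar_comm (hc.of_le (by norm_num))]
  have hev : wdz (cf (rho r)) =ᶠ[𝓝 p] fun x => (starRingEnd ℂ) (wdzbar (cf (rho r)) x) := by
    filter_upwards [(VV_open hr).mem_nhds hp] with x hx
    rw [wdzbar_cf ((rho_smooth hr hx).differentiableAt (by simp)), Complex.conj_conj]
  have hd : DifferentiableAt ℝ (wdzbar (cf (rho r))) p :=
    (contDiffAt_wdzbar hc (m := 2) (by norm_num)).differentiableAt (by simp)
  have h1 := wdwbar_conj hd
  rw [(rho_mixed hr hp h0).2, map_zero] at h1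
  rw [← h1]
  simp only [wdwbar, hev.fderiv_eq]

theorem mem_VV {Ω : Set (ℂ × ℂ)} {r : ℂ × ℂ → ℝ} (hr : IsDefiningFunction Ω r)
    (hopen : IsOpen Ω) (hH : IsHartogs Ω) {p : ℂ × ℂ} (hp : p ∈ frontier Ω)
    (hz : wdz (cf (sdist Ω)) p ≠ 0) : p ∈ VV r := by
  have hd : DifferentiableAt ℝ (sdist Ω) p := by
    rw [← diff_cf]
    by_contra h
    apply hz
    rw [wdz, fderiv_zero_of_not_differentiableAt h]
    simp
  have hnz : ¬ (∀ h : ℂ, fderiv ℝ (sdist Ω) p (h, 0) = 0) := by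
    intro h
    apply hz
    rw [wdz_cf hd, h, h]; simp
  have hz0 : p.1 ≠ 0 := by
    intro h0
    apply hnz
    intro h
    have hfix : rotE Real.pi p = p := by
      rw [rotE_apply]; ext <;> simp [h0]
    have h1 := rot_diff hH Real.pi (q := p) (by rw [hfix]; exact hd)
    rw [hfix] at h1
    have h2 := h1.fderiv
    have h3 := DFunLike.congr_fun h2 (h, 0)
    have h4 : rotE Real.pi (h, 0) = - (h, 0) := by
      rw [rotE_apply]; ext <;> simp
    rw [ContinuousLinearMap.comp_apply] at h3
    change _ = fderiv ℝ (sdist Ω) p (rotE Real.pi (h, 0)) at h3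
    rw [h4, map_neg] at h3
    linarith
  obtain ⟨hq, hg⟩ := gg_frontier hr hopen hH hp hz0
  refine ⟨hz0, ?_, by rw [hg]; simp⟩
  intro ha
  set q : ℂ × ℂ := ((‖p.1‖ : ℂ), p.2) with hqdef
  have hqp : rotE (Complex.arg p.1) q = p := rotE_arg p.1 p.2
  have hδq := rot_diff hH (Complex.arg p.1) (q := q) (by rw [hqp]; exact hd)
  rw [hqp] at hδq
  have hnpos := norm_pos_iff.2 hz0
  -- derivative in the radial direction
  have hrq : fderiv ℝ r q (1, 0) = 0 := by
    have hlam : lam p = (Real.log ‖p.1‖, p.2) := by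
      have h : p.1.re ^ 2 + p.1.im ^ 2 = ‖p.1‖ ^ 2 := by
        rw [Complex.sq_norm, Complex.normSq_apply]; ring
      rw [lam, h, Real.log_pow]
      push_cast
      rw [mul_div_cancel_left₀ _ two_ne_zero]
    have hexp : HasFDerivAt (fun y : ℝ × ℂ => ((Real.exp y.1 : ℝ) : ℂ))
        (Complex.ofRealCLM.comp (Real.exp (lam p).1 • ContinuousLinearMap.fst ℝ ℝ ℂ)) (lam p) :=
      Complex.ofRealCLM.hasFDerivAt.comp (lam p)
        (HasFDerivAt.exp (f := fun y : ℝ × ℂ => y.1) hasFDerivAt_fst)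
    have hs : HasFDerivAt (fun y : ℝ × ℂ => y.2) (ContinuousLinearMap.snd ℝ ℝ ℂ) (lam p) :=
      hasFDerivAt_snd
    have hel : Real.exp (lam p).1 = ‖p.1‖ := by rw [hlam]; exact Real.exp_log hnpos
    have hpt : (((Real.exp (lam p).1 : ℝ) : ℂ), (lam p).2) = q := by
      rw [hel, hqdef]; rfl
    have hr' : HasFDerivAt r (fderiv ℝ r q) (((Real.exp (lam p).1 : ℝ) : ℂ), (lam p).2) := by
      rw [hpt]; exact (hr.1.differentiable (by simp) q).hasFDerivAt
    have hgd : HasFDerivAt (gg r) _ (lam p) :=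
      HasFDerivAt.comp (g := r) (lam p) hr' (hexp.prodMk hs)
    rw [aa, du, hgd.fderiv] at ha
    simp [hel] at ha
    have h5 : ((‖p.1‖ : ℂ), (0 : ℂ)) = ‖p.1‖ • ((1 : ℂ), (0 : ℂ)) := by simp
    rw [h5, map_smul, smul_eq_mul] at ha
    exact (mul_eq_zero.1 ha).resolve_left hnpos.ne'
  have hδ1 : fderiv ℝ (sdist Ω) q (1, 0) = 0 := by
    obtain ⟨c, hc⟩ := tang hr hopen hq (F := cf (sdist Ω)) (diff_cf.2 hδq.differentiableAt)
      (Eventually.of_forall fun x hx => by simp [cf, sdist_frontier hx])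
    have := hc (1, 0)
    rw [fderiv_cf hδq.differentiableAt, hrq] at this
    simpa using this
  have hδI : fderiv ℝ (sdist Ω) q (Complex.I, 0) = 0 := by
    have hcurve : HasDerivAt (fun t : ℝ => (Complex.exp (t * Complex.I) * (‖p.1‖ : ℂ), p.2))
        (Complex.I * (‖p.1‖ : ℂ), 0) 0 := by
      have h1 : HasDerivAt (fun t : ℝ => (t : ℂ) * Complex.I) Complex.I 0 := by
        simpa using (Complex.ofRealCLM.hasDerivAt (x := (0:ℝ))).mul_const Complex.I
      have h2 := (h1.cexp).mul_const (‖p.1‖ : ℂ)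
      simp only [Complex.ofReal_zero, zero_mul, Complex.exp_zero, one_mul] at h2
      exact h2.prodMk (hasDerivAt_const 0 p.2)
    have hF : HasFDerivAt (sdist Ω) (fderiv ℝ (sdist Ω) q)
        (Complex.exp (((0:ℝ) : ℂ) * Complex.I) * (‖p.1‖ : ℂ), p.2) := by
      have : (Complex.exp (((0:ℝ) : ℂ) * Complex.I) * (‖p.1‖ : ℂ), p.2) = q := by simp [hqdef]
      rw [this]; exact hδq.differentiableAt.hasFDerivAt
    have h3 := hF.comp_hasDerivAt (0:ℝ) hcurve
    have h4 : (sdist Ω ∘ fun t : ℝ => (Complex.exp (t * Complex.I) * (‖p.1‖ : ℂ), p.2)) =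
        fun _ => sdist Ω q := by
      funext t
      rw [← rotE_sdist hH t q, rotE_apply]
      rfl
    rw [h4] at h3
    have h5 := h3.unique (hasDerivAt_const (0:ℝ) (sdist Ω q))
    have h6 : (Complex.I * (‖p.1‖ : ℂ), (0 : ℂ)) = ‖p.1‖ • (Complex.I, (0 : ℂ)) := by
      ext <;> simp [mul_comm]
    rw [h6, map_smul, smul_eq_mul] at h5
    exact (mul_eq_zero.1 h5).resolve_left hnpos.ne'
  apply hnz
  intro h
  have hall : ∀ k : ℂ, fderiv ℝ (sdist Ω) q (k, 0) = 0 := by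
    intro k
    have : (k, (0 : ℂ)) = k.re • ((1 : ℂ), (0 : ℂ)) + k.im • (Complex.I, (0 : ℂ)) := by
      ext <;> simp
    rw [this, map_add, map_smul, map_smul, hδ1, hδI]; simp
  obtain ⟨v, hv⟩ := (rotE (Complex.arg p.1)).surjective (h, 0)
  have hv2 : v = (v.1, 0) := by
    rw [rotE_apply] at hv
    have := congrArg Prod.snd hv
    ext
    · rfl
    · exact this
  have h7 := hall v.1
  rw [← hv2, hδq.fderiv] at h7
  change fderiv ℝ (sdist Ω) p (rotE (Complex.arg p.1) v) = 0 at h7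
  rwa [hv] at h7

/-- Lemma 3.2 of Abdulsahib–Harrington: near a compact set of boundary
points where `∂δ̃/∂z ≠ 0`, there is a local defining function which is plurisubharmonic
on the boundary. -/
theorem stmt_9 (Ω : Set (ℂ × ℂ)) (hopen : IsOpen Ω) (hconn : IsConnected Ω)
    (hbdd : Bornology.IsBounded Ω) (hH : IsHartogs Ω) (hsm : HasSmoothBoundary Ω)
    (hpsc : IsPseudoconvex Ω) (K : Set (ℂ × ℂ)) (hKsub : K ⊆ frontier Ω)
    (hKcomp : IsCompact K) (hKz : ∀ p ∈ K, wdz (cf (sdist Ω)) p ≠ 0) :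
    ∃ (V : Set (ℂ × ℂ)) (ρ : ℂ × ℂ → ℝ), IsOpen V ∧ K ⊆ V ∧
      ContDiffOn ℝ (⊤ : ℕ∞) ρ V ∧ (∀ p ∈ V, p ∈ Ω ↔ ρ p < 0) ∧
      (∀ p ∈ frontier Ω ∩ V, fderiv ℝ ρ p ≠ 0) ∧
      ∀ p ∈ frontier Ω ∩ V, ∀ ξ η : ℂ, 0 ≤ cHess ρ p ξ η := by
  obtain ⟨r, hr⟩ := hsm
  have hV := VV_open hr.1
  have h0 : ∀ p ∈ frontier Ω ∩ VV r, gg r (lam p) = 0 := fun p hp =>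
    (gg_frontier hr hopen hH hp.1 hp.2.1).2
  have hne : ∀ p ∈ frontier Ω ∩ VV r, wdz (cf (rho r)) p ≠ 0 := fun p hp =>
    rho_wdz_ne hr.1 hp.2 (h0 p hp)
  refine ⟨VV r, rho r, hV, fun p hp => mem_VV hr hopen hH (hKsub hp) (hKz p hp),
    fun p hp => (rho_smooth hr.1 hp).contDiffWithinAt, fun p hp => rho_neg hr hH hp, ?_, ?_⟩
  · intro p hp h
    apply hne p hp
    rw [wdz_cf ((rho_smooth hr.1 hp.2).differentiableAt (by simp)), h]
    simp
  · intro p hp ξ η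
    exact levi hr hopen hpsc hV (fun p hp => (rho_smooth hr.1 hp).of_le three_le)
      (fun p hp h => (rho_neg hr hH hp).1 h)
      (fun p hp => by simp [rho, ss, h0 p hp]) hne
      (fun p hp => (rho_mixed hr.1 hp.2 (h0 p hp)).1)
      (fun p hp => (rho_mixed hr.1 hp.2 (h0 p hp)).2)
      (fun p hp => rho_mixed3 hr.1 hp.2 (h0 p hp)) hp ξ η

end
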